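/- Let d ≥ 2, let p ∈ ℝ^d have pairwise distinct coordinates, let L be a nonempty proper subset of [d], and let J be a nonempty subset of [d]. Let H_{L,p}^+ = {x ∈ ℝ^d : min_{i∈L}(x_i − p_i) < min_{k∉L}(x_k − p_k)} be the open tropical halfspace determined by L with apex p. Then H_{L,p}^+ approximates T_J if and only if there exists i ∈ L ∩ J with J ⊆ {i} ∪ {q ∈ [d] : p_q < p_i}; that is, the types approximated by H_{L,p}^+ are exactly the union over i ∈ L of the types approximated by the open sectors H_{i,p}^+. -/

import Mathlib

open EMetric

/-- `m(x) = min_l x_l`, the minimum coordinate of `x`. -/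
noncomputable def minCoord {d : ℕ} (x : EuclideanSpace ℝ (Fin d)) : ℝ :=
  sInf (Set.range fun l => x l)

/-- `T_J`: the set of points of type `J` with respect to the tropical (min-plus)
hyperplane with apex `0`. -/
noncomputable def tropType {d : ℕ} (J : Finset (Fin d)) :
    Set (EuclideanSpace ℝ (Fin d)) :=
  {x | {k | x k = minCoord x} = (J : Set (Fin d))}

/-- The open tropical halfspace `H_{L,p}^+ = {x : min_{i∈L}(x_i−p_i) < min_{k∉L}(x_k−p_k)}`. -/
noncomputable def openHalfspace {d : ℕ} (L : Finset (Fin d))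
    (p : EuclideanSpace ℝ (Fin d)) : Set (EuclideanSpace ℝ (Fin d)) :=
  {x | sInf ((fun l => x l - p l) '' (L : Set (Fin d))) <
       sInf ((fun l => x l - p l) '' ((L : Set (Fin d))ᶜ))}

/-- `A` approximates `K`: there is `ε > 0` such that every point of `K` at
(Euclidean) distance at least `ε` from the relative boundary `cl K \ K` of `K`
belongs to `A` (with the distance to the empty set taken to be `+∞`). -/
def Approximates {d : ℕ} (A K : Set (EuclideanSpace ℝ (Fin d))) : Prop :=
  ∃ ε > (0 : ℝ), ∀ x ∈ K, ENNReal.ofReal ε ≤ infEdist x (closure K \ K) → x ∈ A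


lemma mem_tropType_iff {d : ℕ} (J : Finset (Fin d)) (hJ : J.Nonempty)
    (x : EuclideanSpace ℝ (Fin d)) :
    x ∈ tropType J ↔ ∃ c, (∀ k ∈ J, x k = c) ∧ ∀ k, k ∉ J → c < x k := by
  obtain ⟨j, hj⟩ := hJ
  have hle : ∀ k, minCoord x ≤ x k := fun k =>
    csInf_le (Set.finite_range _).bddBelow ⟨k, rfl⟩
  constructor
  · intro h
    have h' : ∀ k, x k = minCoord x ↔ k ∈ J := fun k => by
      have := Set.ext_iff.1 h k
      simpa using this
    exact ⟨minCoord x, fun k hk => (h' k).2 hk, fun k hk =>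
      lt_of_le_of_ne (hle k) fun e => hk ((h' k).1 e.symm)⟩
  · rintro ⟨c, h1, h2⟩
    have hm : minCoord x = c := by
      apply le_antisymm
      · exact (hle j).trans (h1 j hj).le
      · refine le_csInf ⟨_, ⟨j, rfl⟩⟩ ?_
        rintro _ ⟨k, rfl⟩
        by_cases hk : k ∈ J
        · exact (h1 k hk).ge
        · exact (h2 k hk).le
    show {k | x k = minCoord x} = (J : Set (Fin d))
    ext k
    simp only [Set.mem_ofPred_eq, hm, Finset.mem_coe]
    constructor
    · intro e
      by_contra hk
      exact (h2 k hk).ne' e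
    · exact h1 k

lemma mem_openHalfspace_iff {d : ℕ} (L : Finset (Fin d)) (hL : L.Nonempty)
    (hL' : L ≠ Finset.univ) (p x : EuclideanSpace ℝ (Fin d)) :
    x ∈ openHalfspace L p ↔ ∃ l ∈ L, ∀ k, k ∉ L → x l - p l < x k - p k := by
  have hne : ((fun l => x l - p l) '' ((L : Set (Fin d))ᶜ)).Nonempty := by
    obtain ⟨k, hk⟩ : ∃ k, k ∉ L := by
      by_contra! h
      exact hL' (Finset.eq_univ_iff_forall.2 h)
    exact ⟨_, ⟨k, by simpa using hk, rfl⟩⟩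
  have hf1 : ((fun l => x l - p l) '' (L : Set (Fin d))).Finite := Set.toFinite _
  have hf2 : ((fun l => x l - p l) '' ((L : Set (Fin d))ᶜ)).Finite := Set.toFinite _
  have hne1 : ((fun l => x l - p l) '' (L : Set (Fin d))).Nonempty :=
    Set.Nonempty.image _ (by simpa using hL)
  rw [openHalfspace, Set.mem_ofPred_eq]
  constructor
  · intro h
    obtain ⟨l, hl, e⟩ := hne1.csInf_mem hf1
    refine ⟨l, hl, fun k hk => ?_⟩
    have e' : x l - p l = _ := e
    rw [e']
    exact h.trans_le (csInf_le hf2.bddBelow ⟨k, by simpa using hk, rfl⟩)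
  · rintro ⟨l, hl, h⟩
    obtain ⟨k, hk, e⟩ := hne.csInf_mem hf2
    rw [← e]
    exact (csInf_le hf1.bddBelow ⟨l, hl, rfl⟩).trans_lt (h k (by simpa using hk))

lemma boundary_coord {d : ℕ} (J : Finset (Fin d)) (j : Fin d) (hj : j ∈ J)
    (y : EuclideanSpace ℝ (Fin d)) (hy : y ∈ closure (tropType J) \ tropType J) :
    ∃ k, k ∉ J ∧ y k = y j := by
  have hc : IsClosed {z : EuclideanSpace ℝ (Fin d) |
      (∀ k ∈ J, z k = z j) ∧ ∀ k, k ∉ J → z j ≤ z k} := by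
    simp only [Set.ofPred_and, Set.ofPred_forall]
    refine IsClosed.inter ?_ ?_
    · exact isClosed_iInter fun k => isClosed_iInter fun _ =>
        isClosed_eq (by fun_prop) (by fun_prop)
    · exact isClosed_iInter fun k => isClosed_iInter fun _ =>
        isClosed_le (by fun_prop) (by fun_prop)
  have hs : tropType J ⊆ {z : EuclideanSpace ℝ (Fin d) |
      (∀ k ∈ J, z k = z j) ∧ ∀ k, k ∉ J → z j ≤ z k} := by
    intro z hz
    obtain ⟨c, h1, h2⟩ := (mem_tropType_iff J ⟨j, hj⟩ z).1 hz
    exact ⟨fun k hk => (h1 k hk).trans (h1 j hj).symm,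
      fun k hk => (h1 j hj).le.trans (h2 k hk).le⟩
  obtain ⟨h1, h2⟩ := closure_minimal hs hc hy.1
  by_contra! h
  exact hy.2 ((mem_tropType_iff J ⟨j, hj⟩ y).2
    ⟨y j, h1, fun k hk => lt_of_le_of_ne (h2 k hk) (h k hk).symm⟩)

lemma shift_mem_boundary {d : ℕ} (J : Finset (Fin d)) (x : EuclideanSpace ℝ (Fin d))
    (c : ℝ) (hJ : J.Nonempty) (h1 : ∀ k ∈ J, x k = c) (h2 : ∀ k, k ∉ J → c < x k)
    (k : Fin d) (hk : k ∉ J) :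
    x - (x k - c) • EuclideanSpace.single k (1 : ℝ) ∈ closure (tropType J) \ tropType J := by
  constructor
  · let f : ℝ → EuclideanSpace ℝ (Fin d) := fun t => x - t • EuclideanSpace.single k (1 : ℝ)
    have hf : Continuous f := by fun_prop
    have hsub : f '' (Set.Ico 0 (x k - c)) ⊆ tropType J := by
      rintro _ ⟨t, ht, rfl⟩
      rw [mem_tropType_iff J hJ]
      refine ⟨c, fun l hl => ?_, fun l hl => ?_⟩
      · have : l ≠ k := fun e => hk (e ▸ hl)
        simp [f, this, h1 l hl]
      · by_cases e : l = k
        · subst e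
          simp [f]
          linarith [ht.2]
        · simp [f, e, h2 l hl]
    have hpos := h2 k hk
    have hmem : (x k - c) ∈ closure (Set.Ico 0 (x k - c)) := by
      rw [closure_Ico (by linarith)]
      exact ⟨by linarith, le_rfl⟩
    exact closure_mono hsub (image_closure_subset_closure_image hf ⟨_, hmem, rfl⟩)
  · intro h
    obtain ⟨c', g1, g2⟩ := (mem_tropType_iff J hJ _).1 h
    obtain ⟨j, hj⟩ := hJ
    have hjk : j ≠ k := fun e => hk (e ▸ hj)
    have a := g1 j hj
    have b := g2 k hk
    simp [hjk, h1 j hj] at a b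
    linarith

theorem stmt_9 {d : ℕ} (hd : 2 ≤ d) (p : EuclideanSpace ℝ (Fin d))
    (hp : Function.Injective fun l => p l)
    (L : Finset (Fin d)) (hL : L.Nonempty) (hL' : L ≠ Finset.univ)
    (J : Finset (Fin d)) (hJ : J.Nonempty) :
    Approximates (openHalfspace L p) (tropType J) ↔
      ∃ i ∈ L, i ∈ J ∧ ∀ q ∈ J, q ≠ i → p q < p i := by
  obtain ⟨M, hM⟩ : ∃ M : ℝ, ∀ k, |p k| ≤ M :=
    ⟨∑ k, |p k|, fun k => Finset.single_le_sum (f := fun k => |p k|)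
      (fun _ _ => abs_nonneg _) (Finset.mem_univ k)⟩
  constructor
  · rintro ⟨ε, hε, h⟩
    obtain ⟨i, hi, hmax⟩ := J.exists_max_image (fun l => p l) hJ
    by_cases hiL : i ∈ L
    · exact ⟨i, hiL, hi, fun q hq hne => lt_of_le_of_ne (hmax q hq) fun e => hne (hp e)⟩
    exfalso
    have hM0 : 0 ≤ M := (abs_nonneg _).trans (hM i)
    let R : ℝ := 2 * ε + 2 * M
    have hR : R = 2 * ε + 2 * M := rfl
    let x : EuclideanSpace ℝ (Fin d) := WithLp.toLp 2 fun k => if k ∈ J then 0 else R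
    have hx1 : ∀ k ∈ J, x k = 0 := fun k hk => by simp [x, hk]
    have hx2 : ∀ k, k ∉ J → x k = R := fun k hk => by simp [x, hk]
    have hxT : x ∈ tropType J := (mem_tropType_iff J hJ x).2
      ⟨0, hx1, fun k hk => by rw [hx2 k hk]; linarith⟩
    have hxA := h x hxT (by
      refine Metric.le_infEDist.2 fun y hy => ?_
      obtain ⟨k, hk, e⟩ := boundary_coord J i hi y hy
      rw [edist_dist]
      apply ENNReal.ofReal_le_ofReal
      have a : |x i - y i| ≤ dist x y := by
        rw [dist_eq_norm]
        simpa using PiLp.norm_apply_le (x - y) i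
      have b : |x k - y k| ≤ dist x y := by
        rw [dist_eq_norm]
        simpa using PiLp.norm_apply_le (x - y) k
      rw [hx1 i hi] at a
      rw [hx2 k hk, e] at b
      have := abs_le.1 a
      have := abs_le.1 b
      linarith)
    obtain ⟨l, hl, hlt⟩ := (mem_openHalfspace_iff L hL hL' p x).1 hxA
    have h3 := hlt i hiL
    rw [hx1 i hi] at h3
    by_cases hlJ : l ∈ J
    · rw [hx1 l hlJ] at h3
      have : p l ≤ p i := hmax l hlJ
      linarith
    · rw [hx2 l hlJ] at h3
      have := abs_le.1 (hM l)
      have := abs_le.1 (hM i)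
      linarith
  · rintro ⟨i, hiL, hi, hmax⟩
    have hM0 : 0 ≤ M := (abs_nonneg _).trans (hM i)
    refine ⟨2 * M + 1, by linarith, fun x hx hdist => ?_⟩
    rw [mem_openHalfspace_iff L hL hL']
    obtain ⟨c, h1, h2⟩ := (mem_tropType_iff J hJ x).1 hx
    refine ⟨i, hiL, fun k hk => ?_⟩
    rw [h1 i hi]
    by_cases hkJ : k ∈ J
    · have := hmax k hkJ (fun e => hk (e ▸ hiL))
      rw [h1 k hkJ]
      linarith
    · have hb := shift_mem_boundary J x c hJ h1 h2 k hkJ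
      have hle := hdist.trans (Metric.infEDist_le_edist_of_mem hb)
      have hpos := h2 k hkJ
      rw [edist_dist, ENNReal.ofReal_le_ofReal_iff dist_nonneg, dist_eq_norm, sub_sub_cancel,
        norm_smul, EuclideanSpace.norm_single, Real.norm_eq_abs, abs_of_pos (by linarith)] at hle
      simp at hle
      have := abs_le.1 (hM k)
      have := abs_le.1 (hM i)
      linarith
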